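/- (Time regularity, Theorem 6) Let 0<α<1, T>0, and let the Sturm–Liouville eigendata (λ_i, X_i) on [0,l] satisfy the stated hypotheses. Let (c_i) be real numbers with ∑_{i=1}^∞ λ_i² c_i² < ∞, and define u(x,t) = ∑_{i=1}^∞ c_i E_α(−λ_i t^α) X_i(x). Then for each x ∈ [0,l] the function t ↦ u(x,t) is continuously differentiable on (0,T), and ∂u/∂t(x,t) = −∑_{i=1}^∞ c_i λ_i t^{α−1} E_{α,α}(−λ_i t^α) X_i(x), the series converging uniformly on [0,l]×[ε,T] for every 0<ε<T. -/

import Mathlib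

open MeasureTheory Set Filter

/-- The Caputo fractional derivative of order `α` of `f` at `t`:
`(D^α f)(t) = (1/Γ(1−α)) ∫₀ᵗ (t−s)^{−α} f'(s) ds`. -/
noncomputable def caputo (α : ℝ) (f : ℝ → ℝ) (t : ℝ) : ℝ :=
  (1 / Real.Gamma (1 - α)) * ∫ s in (0:ℝ)..t, (t - s) ^ (-α) * deriv f s

/-- The two-parameter Mittag-Leffler function `E_{α,β}(z) = ∑_{k≥0} z^k/Γ(αk+β)`;
`E_α = E_{α,1}`. -/
noncomputable def ml (α β z : ℝ) : ℝ := ∑' k : ℕ, z ^ k / Real.Gamma (α * k + β)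

/-- Sturm–Liouville eigendata on `[0,l]` for the operator `L(X) = −(pX')' + qX` with
Dirichlet boundary conditions: positive eigenvalues `λ_i → ∞`, eigenfunctions
`X_i ∈ C²([0,l])` vanishing at `0` and `l`, orthonormal in `L²(0,l)`, and the series
`∑ |X_i(x)|²/λ_i`, `∑ |X_i'(x)|²/λ_i²`, `∑ |X_i''(x)|²/λ_i³` converging uniformly
on `[0,l]`. -/
structure SturmLiouvilleData (l : ℝ) (p q : ℝ → ℝ) (lam : ℕ → ℝ) (X : ℕ → ℝ → ℝ) :
    Prop where
  hl : 0 < l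
  hp : ContDiffOn ℝ 1 p (Set.Icc 0 l)
  hppos : ∀ x ∈ Set.Icc (0:ℝ) l, 0 < p x
  hq : ContinuousOn q (Set.Icc 0 l)
  hqnn : ∀ x ∈ Set.Icc (0:ℝ) l, 0 ≤ q x
  hlam : ∀ i, 0 < lam i
  hlamtop : Filter.Tendsto lam Filter.atTop Filter.atTop
  hX : ∀ i, ContDiffOn ℝ 2 (X i) (Set.Icc 0 l)
  heig : ∀ i, ∀ x ∈ Set.Ioo (0:ℝ) l,
    -(deriv (fun y => p y * deriv (X i) y) x) + q x * X i x = lam i * X i x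
  hbc0 : ∀ i, X i 0 = 0
  hbcl : ∀ i, X i l = 0
  horth : ∀ i j, (∫ x in (0:ℝ)..l, X i x * X j x) = if i = j then 1 else 0
  hser1 : ∃ g : ℝ → ℝ, TendstoUniformlyOn
    (fun N x => ∑ i ∈ Finset.range N, (X i x) ^ 2 / lam i) g Filter.atTop (Set.Icc 0 l)
  hser2 : ∃ g : ℝ → ℝ, TendstoUniformlyOn
    (fun N x => ∑ i ∈ Finset.range N, (deriv (X i) x) ^ 2 / (lam i) ^ 2) g
    Filter.atTop (Set.Icc 0 l)
  hser3 : ∃ g : ℝ → ℝ, TendstoUniformlyOn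
    (fun N x => ∑ i ∈ Finset.range N, (deriv (deriv (X i)) x) ^ 2 / (lam i) ^ 3) g
    Filter.atTop (Set.Icc 0 l)

/-!
Luchko's extremum principle says that `D^α f ≥ 0` at a maximum of `f` on `[0, t]`, hence gives a
comparison principle. Applied to `D^α E = -E`, where `E(t) = E_α(-t^α)`, it yields `0 ≤ E ≤ 1`;
applied to `D^α V = -V + α E`, where `V(t) = t^α E_{α,α}(-t^α)`, it yields `0 ≤ V ≤ α`. Thus
`λ t^(α-1) E_{α,α}(-λ t^α) ≤ 1/t` uniformly in `λ`, and the differentiated series is dominated on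
`t ≥ ε` by `ε⁻¹ ∑ |c_i X_i(x)|`. That series converges uniformly in `x` because
`|c_i X_i| ≤ λ_i c_i² + X_i² / λ_i`.
-/

open scoped Topology

section Gamma

lemma Gamma_add_one_mul_rpow_le {x a : ℝ} (hx : 0 < x) (ha : 0 < a) :
    Real.Gamma (x + 1) * x ^ a ≤ Real.Gamma (x + 1 + a) := by
  have hΓ : 0 < Real.Gamma (x + 1) := Real.Gamma_pos_of_pos (by positivity)
  have hslope := Real.convexOn_log_Gamma.slope_mono_adjacent (x := x) (y := x + 1) (z := x + 1 + a)
    hx (mem_Ioi.2 (by positivity)) (by linarith) (by linarith)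
  have hlog : Real.log (Real.Gamma (x + 1)) - Real.log (Real.Gamma x) = Real.log x := by
    rw [Real.Gamma_add_one hx.ne', Real.log_mul hx.ne' (Real.Gamma_pos_of_pos hx).ne',
      add_sub_cancel_right]
  simp only [Function.comp_apply, add_sub_cancel_left, div_one, hlog, le_div_iff₀ ha] at hslope
  refine (Real.log_le_log_iff (by positivity) (Real.Gamma_pos_of_pos (by positivity))).1 ?_
  rw [Real.log_mul hΓ.ne' (by positivity), Real.log_rpow hx]
  linarith

lemma tendsto_Gamma_div_Gamma_add {a : ℝ} (ha : 0 < a) :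
    Tendsto (fun x => Real.Gamma x / Real.Gamma (x + a)) atTop (𝓝 0) := by
  refine squeeze_zero' ?_ ?_
    ((tendsto_rpow_neg_atTop ha).comp (tendsto_atTop_add_const_right _ (-1 : ℝ) tendsto_id))
  · filter_upwards [eventually_gt_atTop 0] with x hx
    exact div_nonneg (Real.Gamma_nonneg_of_nonneg hx.le)
      (Real.Gamma_nonneg_of_nonneg (by positivity))
  · filter_upwards [eventually_gt_atTop 1] with x hx
    have hx1 : 0 < x + -1 := by linarith
    have hle := Gamma_add_one_mul_rpow_le hx1 ha
    rw [neg_add_cancel_right] at hle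
    rw [Function.comp_apply, id, Real.rpow_neg hx1.le, ← one_div,
      div_le_div_iff₀ (Real.Gamma_pos_of_pos (by positivity)) (by positivity)]
    linarith

lemma integral_sub_rpow_mul_rpow {u v t : ℝ} (hu : 0 < u) (hv : 0 < v) (ht : 0 < t) :
    ∫ s in (0 : ℝ)..t, (t - s) ^ (v - 1) * s ^ (u - 1)
      = Real.Gamma v * Real.Gamma u / Real.Gamma (u + v) * t ^ (u + v - 1) := by
  have hcast : ∀ s ∈ uIcc 0 t, (((t - s) ^ (v - 1) * s ^ (u - 1) : ℝ) : ℂ)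
      = (s : ℂ) ^ ((u : ℂ) - 1) * ((t : ℂ) - s) ^ ((v : ℂ) - 1) := by
    intro s hs
    rw [uIcc_of_le ht.le] at hs
    push_cast [Complex.ofReal_cpow hs.1, Complex.ofReal_cpow (sub_nonneg.2 hs.2)]
    ring
  have hbeta : Complex.betaIntegral u v
      = ((Real.Gamma v * Real.Gamma u / Real.Gamma (u + v) : ℝ) : ℂ) := by
    rw [Complex.betaIntegral_eq_Gamma_mul_div _ _ (by simpa) (by simpa), ← Complex.ofReal_add]
    simp only [Complex.Gamma_ofReal]
    push_cast
    ring
  refine Complex.ofReal_injective ?_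
  rw [← intervalIntegral.integral_ofReal, intervalIntegral.integral_congr hcast,
    Complex.betaIntegral_scaled _ _ ht, hbeta]
  push_cast [Complex.ofReal_cpow ht.le]
  ring

lemma intervalIntegrable_sub_rpow_mul_rpow {u v t : ℝ} (hu : 0 < u) (hv : 0 < v) (ht : 0 < t) :
    IntervalIntegrable (fun s => (t - s) ^ (v - 1) * s ^ (u - 1)) volume 0 t := by
  refine intervalIntegral.intervalIntegrable_of_integral_ne_zero ?_
  have := Real.Gamma_pos_of_pos hu
  have := Real.Gamma_pos_of_pos hv
  have := Real.Gamma_pos_of_pos (add_pos hu hv)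
  rw [integral_sub_rpow_mul_rpow hu hv ht]
  positivity

end Gamma

/-- The coefficients of an entire real power series: `∑ bₖ xᵏ` converges for every real `x`. -/
def EntireSeries (b : ℕ → ℝ) : Prop := ∀ x : ℝ, Summable fun k => b k * x ^ k

namespace EntireSeries

variable {b : ℕ → ℝ}

lemma deriv (hb : EntireSeries b) : EntireSeries fun k => (k + 1) * b (k + 1) := by
  intro x
  have hshift : Summable fun k => |b (k + 1) * (2 * |x| + 1) ^ (k + 1)| :=
    (summable_nat_add_iff 1).2 (hb _).abs
  refine Summable.of_norm_bounded hshift fun k => ?_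
  have hk : (k + 1 : ℝ) ≤ 2 ^ k := by exact_mod_cast Nat.lt_two_pow_self (n := k)
  rw [Real.norm_eq_abs, abs_mul, abs_mul, abs_mul, abs_pow, abs_pow, abs_of_nonneg (by positivity),
    abs_of_nonneg (by positivity : 0 ≤ 2 * |x| + 1)]
  calc (k + 1) * |b (k + 1)| * |x| ^ k
      ≤ 2 ^ k * |b (k + 1)| * |x| ^ k := by gcongr
    _ = |b (k + 1)| * (2 * |x|) ^ k := by ring
    _ ≤ |b (k + 1)| * (2 * |x| + 1) ^ (k + 1) := by
      gcongr ?_ * ?_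
      exact (pow_le_pow_left₀ (by positivity) (by linarith) k).trans
        (pow_le_pow_right₀ (by linarith [abs_nonneg x]) k.le_succ)

lemma hasDerivAt (hb : EntireSeries b) (y : ℝ) :
    HasDerivAt (fun x => ∑' k, b k * x ^ k) (∑' k : ℕ, (k + 1) * b (k + 1) * y ^ k) y := by
  have hy : y ∈ Metric.ball (0 : ℝ) (|y| + 1) := by simp
  have hshift (x : ℝ) : (fun k : ℕ => (k + 1) * b (k + 1) * x ^ k)
      = fun k => b (k + 1) * ((k + 1 : ℕ) * x ^ (k + 1 - 1)) := by
    funext k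
    push_cast [Nat.add_sub_cancel]
    ring
  have hsum (x : ℝ) : Summable fun k : ℕ => b k * (k * x ^ (k - 1)) := by
    rw [← summable_nat_add_iff 1, ← hshift]
    exact hb.deriv x
  have hderiv := hasDerivAt_tsum_of_isPreconnected (hsum (|y| + 1)).abs Metric.isOpen_ball
    (convex_ball _ _).isPreconnected (fun k z _ => (hasDerivAt_pow k z).const_mul (b k))
    (fun k z hz => ?_) hy (hb y) hy
  · rwa [(hsum y).tsum_eq_zero_add, Nat.cast_zero, zero_mul, mul_zero, zero_add, ← hshift]
      at hderiv
  · simp only [Real.norm_eq_abs, abs_mul, abs_pow, Nat.abs_cast,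
      abs_of_pos (by positivity : 0 < |y| + 1)]
    gcongr
    exact (mem_ball_zero_iff.1 hz).le

end EntireSeries

section MittagLeffler

variable {α β : ℝ}

lemma Gamma_mul_natCast_add_pos (hα : 0 < α) (hβ : 0 < β) (k : ℕ) :
    0 < Real.Gamma (α * k + β) :=
  Real.Gamma_pos_of_pos (by positivity)

lemma Gamma_mul_succ_add_one (hα : 0 < α) (k : ℕ) :
    Real.Gamma (α * (k + 1) + 1) = α * (k + 1) * Real.Gamma (α * k + α) := by
  rw [Real.Gamma_add_one (by positivity), mul_add_one]

lemma entireSeries_inv_Gamma (hα : 0 < α) (hβ : 0 < β) :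
    EntireSeries fun k => (Real.Gamma (α * k + β))⁻¹ := by
  intro x
  have hΓ := Gamma_mul_natCast_add_pos hα hβ
  rcases eq_or_ne x 0 with rfl | hx
  · exact summable_of_ne_finset_zero (s := {0}) fun k hk => by
      simp [Finset.notMem_singleton.1 hk]
  refine summable_of_ratio_test_tendsto_lt_one (l := 0) zero_lt_one
    (Eventually.of_forall fun k => mul_ne_zero (inv_pos.2 (hΓ k)).ne' (pow_ne_zero k hx)) ?_
  have harg : Tendsto (fun k : ℕ => α * k + β) atTop atTop :=
    tendsto_atTop_add_const_right _ _ (tendsto_natCast_atTop_atTop.const_mul_atTop hα)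
  have hratio := ((tendsto_Gamma_div_Gamma_add hα).comp harg).const_mul |x|
  rw [mul_zero] at hratio
  refine hratio.congr fun k => ?_
  have hk := hΓ k
  have hk1 := hΓ (k + 1)
  rw [Nat.cast_add_one, mul_add_one, add_right_comm] at hk1
  have : 0 < |x| := abs_pos.2 hx
  simp only [Function.comp_apply, Real.norm_eq_abs, abs_mul, abs_inv, abs_pow, Nat.cast_add_one,
    mul_add_one, add_right_comm _ α β, abs_of_pos hk, abs_of_pos hk1, pow_succ]
  field_simp

lemma ml_eq_tsum_inv_Gamma (α β : ℝ) :
    ml α β = fun z => ∑' k : ℕ, (Real.Gamma (α * k + β))⁻¹ * z ^ k :=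
  funext fun _ => tsum_congr fun _ => div_eq_inv_mul _ _

lemma hasSum_ml (hα : 0 < α) (hβ : 0 < β) (z : ℝ) :
    HasSum (fun k : ℕ => z ^ k / Real.Gamma (α * k + β)) (ml α β z) :=
  ((entireSeries_inv_Gamma hα hβ z).congr fun _ => (div_eq_inv_mul _ _).symm).hasSum

lemma ml_zero (α : ℝ) : ml α 1 0 = 1 := by
  rw [ml, tsum_eq_single 0 fun k hk => by simp [hk]]
  simp

lemma ml_one_one (z : ℝ) : ml 1 1 z = Real.exp z := by
  rw [ml, Real.exp_eq_exp_ℝ, NormedSpace.exp_eq_tsum_div]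
  simp only [one_mul, Real.Gamma_nat_eq_factorial]

lemma differentiable_ml (hα : 0 < α) (hβ : 0 < β) : Differentiable ℝ (ml α β) := by
  rw [ml_eq_tsum_inv_Gamma]
  exact fun z => ((entireSeries_inv_Gamma hα hβ).hasDerivAt z).differentiableAt

lemma hasDerivAt_ml_one (hα : 0 < α) (z : ℝ) : HasDerivAt (ml α 1) (ml α α z / α) z := by
  have hderiv := (entireSeries_inv_Gamma hα one_pos).hasDerivAt z
  rw [← ml_eq_tsum_inv_Gamma] at hderiv
  refine hderiv.congr_deriv ?_
  rw [ml, ← tsum_div_const]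
  refine tsum_congr fun k => ?_
  have := Gamma_mul_natCast_add_pos hα hα k
  rw [Nat.cast_add_one, Gamma_mul_succ_add_one hα]
  field_simp

lemma hasDerivAt_ml_one_rpow (hα : 0 < α) (lam : ℝ) {t : ℝ} (ht : 0 < t) :
    HasDerivAt (fun s => ml α 1 (lam * s ^ α)) (lam * t ^ (α - 1) * ml α α (lam * t ^ α)) t := by
  refine ((hasDerivAt_ml_one hα _).comp t
    ((Real.hasDerivAt_rpow_const (.inl ht.ne')).const_mul lam)).congr_deriv ?_
  field_simp

end MittagLeffler

section Caputo

variable {α t : ℝ} {f : ℝ → ℝ}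

lemma caputo_neg (α : ℝ) (f : ℝ → ℝ) (t : ℝ) : caputo α (fun s => -f s) t = -caputo α f t := by
  simp only [caputo, deriv.fun_neg, mul_neg, intervalIntegral.integral_neg]

lemma tendsto_sub_rpow_mul_sub (hα1 : α < 1) (hf : DifferentiableWithinAt ℝ f (Iio t) t) :
    Tendsto (fun s => (t - s) ^ (-α) * (f s - f t)) (𝓝[<] t) (𝓝 0) := by
  have hslope : Tendsto (slope f t) (𝓝[<] t) (𝓝 (derivWithin f (Iio t) t)) :=
    (hasDerivWithinAt_iff_tendsto_slope' self_notMem_Iio).1 hf.hasDerivWithinAt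
  have hpow : Tendsto (fun s => -(t - s) ^ (1 - α)) (𝓝[<] t) (𝓝 0) := by
    have hcont : Continuous fun s => -(t - s) ^ (1 - α) :=
      ((Real.continuous_rpow_const (by linarith)).comp (by fun_prop)).neg
    have htend := hcont.tendsto t
    rw [sub_self, Real.zero_rpow (by linarith), neg_zero] at htend
    exact htend.mono_left nhdsWithin_le_nhds
  have hmul := hpow.mul hslope
  rw [zero_mul] at hmul
  refine hmul.congr' ?_
  filter_upwards [self_mem_nhdsWithin] with s (hs : s < t)
  have hst : t - s ≠ 0 := by linarith
  have hst' : s - t ≠ 0 := by linarith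
  rw [slope_def_field, show 1 - α = -α + 1 by ring, Real.rpow_add_one hst]
  field_simp
  ring

lemma sub_rpow_mul_sub_le_integral {r : ℝ} (hα : 0 ≤ α) (hr : r ∈ Ico 0 t)
    (hfc : ContinuousOn f (Icc 0 t)) (hfd : DifferentiableOn ℝ f (Ioo 0 t))
    (hmax : IsMaxOn f (Icc 0 t) t)
    (hint : IntervalIntegrable (fun s => (t - s) ^ (-α) * deriv f s) volume 0 t) :
    (t - r) ^ (-α) * (f r - f t) ≤ ∫ s in (0 : ℝ)..r, (t - s) ^ (-α) * deriv f s := by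
  have ht : 0 ≤ t := hr.1.trans hr.2.le
  have hle : ∀ s ∈ Icc 0 t, f s - f t ≤ 0 := fun s hs => sub_nonpos.2 (hmax hs)
  have hzero : (t - 0) ^ (-α) * (f 0 - f t) ≤ 0 :=
    mul_nonpos_of_nonneg_of_nonpos (by rw [sub_zero]; positivity) (hle 0 ⟨le_rfl, ht⟩)
  have hsub := intervalIntegral.sub_le_integral_of_hasDeriv_right_of_le hr.1
    (g := fun s => (t - s) ^ (-α) * (f s - f t))
    (g' := fun s => α * (t - s) ^ (-α - 1) * (f s - f t) + (t - s) ^ (-α) * deriv f s)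
    ?_ ?_ ((intervalIntegrable_iff_integrableOn_Icc_of_le ht).1 hint |>.mono_set
      (Icc_subset_Icc_right hr.2.le)) ?_
  · linarith
  · refine ContinuousOn.mul ?_
      ((hfc.mono (Icc_subset_Icc_right hr.2.le)).sub continuousOn_const)
    exact ContinuousOn.rpow_const (by fun_prop) fun s hs => .inl (by linarith [hs.2, hr.2])
  · intro s hs
    have hst : s < t := hs.2.trans hr.2
    have hker : HasDerivAt (fun s => (t - s) ^ (-α)) (α * (t - s) ^ (-α - 1)) s :=
      (((hasDerivAt_id s).const_sub t).rpow_const (.inl (sub_pos.2 hst).ne')).congr_deriv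
        (by simp)
    have hfs := ((hfd s ⟨hs.1, hst⟩).differentiableAt (Ioo_mem_nhds hs.1 hst)).hasDerivAt
    exact (hker.mul (hfs.sub_const (f t))).hasDerivWithinAt
  · intro s hs
    have hst : s < t := hs.2.trans hr.2
    have hker : 0 ≤ α * (t - s) ^ (-α - 1) :=
      mul_nonneg hα (Real.rpow_nonneg (sub_pos.2 hst).le _)
    linarith [mul_nonpos_of_nonneg_of_nonpos hker (hle s ⟨hs.1.le, hst.le⟩)]

/-- Luchko's extremum principle. The kernel `(t - s) ^ (-α)` increases in `s` and `f s ≤ f t`, so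
integration by parts on `[0, r]` bounds the integral of the kernel times `deriv f` from below by the
boundary term at `r`, which vanishes as `r → t`. -/
theorem caputo_nonneg_of_isMaxOn (hα : 0 ≤ α) (hα1 : α < 1) (ht : 0 < t)
    (hfc : ContinuousOn f (Icc 0 t)) (hfd : DifferentiableOn ℝ f (Ioc 0 t))
    (hmax : IsMaxOn f (Icc 0 t) t) : 0 ≤ caputo α f t := by
  refine mul_nonneg
    (one_div_nonneg.2 (Real.Gamma_nonneg_of_nonneg (by linarith))) ?_
  by_cases hint : IntervalIntegrable (fun s => (t - s) ^ (-α) * deriv f s) volume 0 t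
  swap
  -- A non-integrable integrand has integral `0` by convention.
  · rw [intervalIntegral.integral_undef hint]
  have hprim : Tendsto (fun r => ∫ s in (0 : ℝ)..r, (t - s) ^ (-α) * deriv f s) (𝓝[<] t)
      (𝓝 (∫ s in (0 : ℝ)..t, (t - s) ^ (-α) * deriv f s)) := by
    have hcont := intervalIntegral.continuousOn_primitive_interval' hint left_mem_uIcc
    rw [uIcc_of_le ht.le] at hcont
    rw [← nhdsWithin_Ioo_eq_nhdsLT ht]
    exact (hcont t ⟨ht.le, le_rfl⟩).mono_left (nhdsWithin_mono t Ioo_subset_Icc_self)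
  have hleft : DifferentiableWithinAt ℝ f (Iio t) t :=
    (hfd t ⟨ht, le_rfl⟩).mono_of_mem_nhdsWithin
      (mem_of_superset (Ioo_mem_nhdsLT ht) Ioo_subset_Ioc_self)
  refine le_of_tendsto_of_tendsto (tendsto_sub_rpow_mul_sub hα1 hleft) hprim ?_
  filter_upwards [Ioo_mem_nhdsLT ht] with r hr
  exact sub_rpow_mul_sub_le_integral hα (Ioo_subset_Ico_self hr) hfc
    (hfd.mono Ioo_subset_Ioc_self) hmax hint

theorem le_of_caputo_neg {M : ℝ} (hα : 0 ≤ α) (hα1 : α < 1)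
    (hfc : ContinuousOn f (Ici 0)) (hfd : DifferentiableOn ℝ f (Ioi 0)) (h0 : f 0 ≤ M)
    (hneg : ∀ s > 0, M < f s → caputo α f s < 0) (ht : 0 ≤ t) : f t ≤ M := by
  obtain ⟨m, hm, hmax⟩ := isCompact_Icc.exists_isMaxOn (nonempty_Icc.2 ht)
    (hfc.mono (fun _ hs => hs.1))
  refine (hmax (right_mem_Icc.2 ht)).trans ?_
  rcases hm.1.eq_or_lt with rfl | hm0
  · exact h0
  by_contra! hM
  exact (hneg m hm0 hM).not_ge <| caputo_nonneg_of_isMaxOn hα hα1 hm0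
    (hfc.mono (fun _ hs => hs.1)) (hfd.mono (fun _ hs => hs.1))
    (hmax.on_subset (Icc_subset_Icc_right hm.2))

theorem le_of_caputo_pos {M : ℝ} (hα : 0 ≤ α) (hα1 : α < 1)
    (hfc : ContinuousOn f (Ici 0)) (hfd : DifferentiableOn ℝ f (Ioi 0)) (h0 : M ≤ f 0)
    (hpos : ∀ s > 0, f s < M → 0 < caputo α f s) (ht : 0 ≤ t) : M ≤ f t := by
  refine neg_le_neg_iff.1 (le_of_caputo_neg (f := fun s => -f s) hα hα1 hfc.neg hfd.neg
    (neg_le_neg h0) (fun s hs hM => ?_) ht)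
  rw [caputo_neg]
  exact neg_neg_of_pos (hpos s hs (neg_lt_neg_iff.1 hM))

lemma caputo_eq_setIntegral {g : ℝ → ℝ} (ht : 0 ≤ t) (hg : ∀ s ∈ Ioo 0 t, deriv f s = g s) :
    caputo α f t = 1 / Real.Gamma (1 - α) * ∫ s in Ioo 0 t, (t - s) ^ (-α) * g s := by
  rw [caputo, intervalIntegral.integral_of_le ht, integral_Ioc_eq_integral_Ioo,
    setIntegral_congr_fun measurableSet_Ioo fun s hs => congrArg _ (hg s hs)]

lemma caputo_rpow {a : ℝ} (hα1 : α < 1) (ha : 0 < a) (ht : 0 < t) :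
    caputo α (fun s => s ^ a) t
      = Real.Gamma (a + 1) / Real.Gamma (a + 1 - α) * t ^ (a - α) := by
  have hα : 0 < 1 - α := sub_pos.2 hα1
  have hbeta := integral_sub_rpow_mul_rpow ha hα ht
  simp only [sub_sub_cancel_left] at hbeta
  simp only [caputo, Real.deriv_rpow_const, mul_left_comm _ a,
    intervalIntegral.integral_const_mul, hbeta]
  rw [Real.Gamma_add_one ha.ne', show a + (1 - α) = a + 1 - α by ring,
    show a + 1 - α - 1 = a - α by ring]
  have := Real.Gamma_pos_of_pos hα
  field_simp

theorem caputo_eq_tsum_of_hasSum_deriv {ι : Type*} [Countable ι] {a c : ι → ℝ} (hα1 : α < 1)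
    (ht : 0 < t) (ha : ∀ i, 0 < a i)
    (hderiv : ∀ s ∈ Ioo 0 t, HasSum (fun i => c i * (a i * s ^ (a i - 1))) (deriv f s))
    (hsum : Summable fun i => c i * caputo α (fun s => s ^ a i) t) :
    caputo α f t = ∑' i, c i * caputo α (fun s => s ^ a i) t := by
  have hΓ : 0 < Real.Gamma (1 - α) := Real.Gamma_pos_of_pos (sub_pos.2 hα1)
  set φ : ι → ℝ → ℝ := fun i s => (t - s) ^ (-α) * (a i * s ^ (a i - 1))
  have hφint : ∀ i, IntegrableOn (φ i) (Ioo 0 t) := fun i => by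
    have hker := (intervalIntegrable_sub_rpow_mul_rpow (ha i) (sub_pos.2 hα1) ht).const_mul (a i)
    simp only [sub_sub_cancel_left, mul_left_comm (a i)] at hker
    exact (intervalIntegrable_iff_integrableOn_Ioo_of_le ht.le).1 hker
  have hφ_nonneg : ∀ i, ∀ s ∈ Ioo 0 t, 0 ≤ φ i s := fun i s hs =>
    mul_nonneg (Real.rpow_nonneg (sub_pos.2 hs.2).le _)
      (mul_nonneg (ha i).le (Real.rpow_nonneg hs.1.le _))
  have hφval : ∀ i, ∫ s in Ioo 0 t, φ i s
      = Real.Gamma (1 - α) * caputo α (fun s => s ^ a i) t := fun i => by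
    rw [caputo_eq_setIntegral ht.le fun _ _ => Real.deriv_rpow_const _ _, ← mul_assoc,
      mul_one_div_cancel hΓ.ne', one_mul]
  have hnorm : ∀ i, ∫ s in Ioo 0 t, ‖c i * φ i s‖
      = Real.Gamma (1 - α) * |c i * caputo α (fun s => s ^ a i) t| := fun i => by
    have hval_nonneg := setIntegral_nonneg (μ := volume) measurableSet_Ioo (hφ_nonneg i)
    have habs : ∫ s in Ioo 0 t, ‖c i * φ i s‖ = ∫ s in Ioo 0 t, |c i| * φ i s :=
      setIntegral_congr_fun measurableSet_Ioo fun s hs => by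
        rw [norm_mul, Real.norm_of_nonneg (hφ_nonneg i s hs), Real.norm_eq_abs]
    rw [habs, integral_const_mul, ← abs_of_nonneg hval_nonneg, hφval, abs_mul, abs_of_pos hΓ,
      abs_mul, mul_left_comm]
  have hswap := hasSum_integral_of_summable_integral_norm (fun i => (hφint i).const_mul (c i))
    ((hsum.abs.mul_left _).congr fun i => (hnorm i).symm)
  simp only [integral_const_mul, hφval, mul_left_comm _ (Real.Gamma (1 - α))] at hswap
  rw [caputo_eq_setIntegral ht.le fun s hs => (hderiv s hs).tsum_eq.symm]
  simp only [← tsum_mul_left, mul_left_comm _ (c _)]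
  rw [← hswap.tsum_eq, tsum_mul_left, ← mul_assoc, one_div_mul_cancel hΓ.ne', one_mul]

theorem caputo_tsum_mul_rpow_pow {b d : ℕ → ℝ} (hα : 0 < α) (hα1 : α < 1) (ht : 0 < t)
    (hb : EntireSeries b) (hd : Summable fun k => d k * (t ^ α) ^ k)
    (hbd : ∀ k : ℕ, b (k + 1) * Real.Gamma (α * (k + 1) + 1) = d k * Real.Gamma (α * k + 1)) :
    caputo α (fun s => ∑' k, b k * (s ^ α) ^ k) t = ∑' k, d k * (t ^ α) ^ k := by
  have hterm : ∀ k : ℕ, b (k + 1) * caputo α (fun s => s ^ (α * (k + 1))) t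
      = d k * (t ^ α) ^ k := fun k => by
    have := Gamma_mul_natCast_add_pos hα one_pos k
    rw [caputo_rpow hα1 (by positivity) ht, ← mul_assoc, ← mul_div_assoc, hbd,
      show α * (k + 1) + 1 - α = α * k + 1 by ring, mul_div_cancel_right₀ _ this.ne',
      show α * (k + 1) - α = α * k by ring, Real.rpow_mul ht.le, Real.rpow_natCast]
  have hderiv : ∀ s ∈ Ioo 0 t, HasSum
      (fun k : ℕ => b (k + 1) * (α * (k + 1) * s ^ (α * (k + 1) - 1)))
      (deriv (fun s => ∑' k, b k * (s ^ α) ^ k) s) := fun s hs => by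
    have hchain := (hb.hasDerivAt (s ^ α)).comp s
      (Real.hasDerivAt_rpow_const (p := α) (.inl hs.1.ne'))
    rw [show deriv (fun s => ∑' k, b k * (s ^ α) ^ k) s = _ from hchain.deriv]
    refine ((hb.deriv (s ^ α)).hasSum.mul_right (α * s ^ (α - 1))).congr_fun fun k => ?_
    rw [show α * (k + 1) - 1 = α * k + (α - 1) by ring, Real.rpow_add hs.1, Real.rpow_mul hs.1.le,
      Real.rpow_natCast]
    ring
  rw [caputo_eq_tsum_of_hasSum_deriv hα1 ht (fun k => by positivity) hderiv
    (hd.congr fun k => (hterm k).symm)]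
  exact tsum_congr hterm

end Caputo

section CaputoMittagLeffler

variable {α t : ℝ}

lemma hasSum_ml_one_mul (hα : 0 < α) (lam y : ℝ) :
    HasSum (fun k : ℕ => lam ^ k / Real.Gamma (α * k + 1) * y ^ k) (ml α 1 (lam * y)) := by
  refine (hasSum_ml hα one_pos (lam * y)).congr_fun fun k => ?_
  rw [mul_pow, div_mul_eq_mul_div]

lemma hasSum_mul_ml_mul (hα : 0 < α) (lam y : ℝ) :
    HasSum (fun k : ℕ => α * k * lam ^ (k - 1) / Real.Gamma (α * k + 1) * y ^ k)
      (y * ml α α (lam * y)) := by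
  rw [← hasSum_nat_add_iff' 1, Finset.sum_range_one, Nat.cast_zero, mul_zero, zero_mul, zero_div,
    zero_mul, sub_zero]
  refine ((hasSum_ml hα hα (lam * y)).mul_left y).congr_fun fun k => ?_
  have := Gamma_mul_natCast_add_pos hα hα k
  rw [Nat.cast_add_one, Gamma_mul_succ_add_one hα, Nat.add_sub_cancel, mul_pow, pow_succ']
  field_simp

theorem caputo_ml_one_rpow (hα : 0 < α) (hα1 : α < 1) (ht : 0 < t) (lam : ℝ) :
    caputo α (fun s => ml α 1 (lam * s ^ α)) t = lam * ml α 1 (lam * t ^ α) := by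
  have hsum := hasSum_ml_one_mul hα lam
  have hd := (hsum (t ^ α)).mul_left lam
  simp only [← mul_assoc] at hd
  rw [funext fun s => (hsum (s ^ α)).tsum_eq.symm,
    caputo_tsum_mul_rpow_pow hα hα1 ht (fun x => (hsum x).summable) hd.summable fun k => ?_,
    hd.tsum_eq]
  have := Gamma_mul_natCast_add_pos hα one_pos k
  have := Gamma_mul_natCast_add_pos hα one_pos (k + 1)
  push_cast at *
  rw [pow_succ']
  field_simp

theorem caputo_rpow_mul_ml (hα : 0 < α) (hα1 : α < 1) (ht : 0 < t) (lam : ℝ) :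
    caputo α (fun s => s ^ α * ml α α (lam * s ^ α)) t
      = lam * (t ^ α * ml α α (lam * t ^ α)) + α * ml α 1 (lam * t ^ α) := by
  have hsum := hasSum_mul_ml_mul hα lam
  have hd := ((hsum (t ^ α)).mul_left lam).add ((hasSum_ml_one_mul hα lam (t ^ α)).mul_left α)
  simp only [← mul_assoc, ← add_mul] at hd
  rw [funext fun s => (hsum (s ^ α)).tsum_eq.symm,
    caputo_tsum_mul_rpow_pow hα hα1 ht (fun x => (hsum x).summable) hd.summable fun k => ?_,
    hd.tsum_eq, mul_assoc]
  have := Gamma_mul_natCast_add_pos hα one_pos k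
  have := Gamma_mul_natCast_add_pos hα one_pos (k + 1)
  have hpow : (k : ℝ) * lam ^ k = lam * (k * lam ^ (k - 1)) := by
    cases k <;> simp [pow_succ]
    ring
  push_cast [Nat.add_sub_cancel] at *
  field_simp
  linarith

end CaputoMittagLeffler

section Bounds

variable {α β x t : ℝ}

lemma continuousOn_ml_neg_rpow (hα : 0 < α) (hβ : 0 < β) :
    ContinuousOn (fun s => ml α β (-s ^ α)) (Ici 0) :=
  ((differentiable_ml hα hβ).continuous.comp
    (Real.continuous_rpow_const hα.le).neg).continuousOn

lemma differentiableOn_ml_neg_rpow (hα : 0 < α) (hβ : 0 < β) :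
    DifferentiableOn ℝ (fun s => ml α β (-s ^ α)) (Ioi 0) := fun s hs =>
  ((differentiable_ml hα hβ _).comp s
    (Real.differentiableAt_rpow_const_of_ne α (ne_of_gt hs)).neg).differentiableWithinAt

lemma ml_one_neg_rpow_mem_Icc (hα : 0 < α) (hα1 : α < 1) (ht : 0 ≤ t) :
    ml α 1 (-t ^ α) ∈ Icc 0 1 := by
  have hcont := continuousOn_ml_neg_rpow hα one_pos
  have hdiff := differentiableOn_ml_neg_rpow hα one_pos
  have h0 : ml α 1 (-0 ^ α) = 1 := by rw [Real.zero_rpow hα.ne', neg_zero, ml_zero]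
  have hcaputo : ∀ s > 0,
      caputo α (fun s => ml α 1 (-s ^ α)) s = -ml α 1 (-s ^ α) := fun s hs => by
    simpa only [neg_one_mul] using caputo_ml_one_rpow hα hα1 hs (-1)
  constructor
  · refine le_of_caputo_pos (f := fun s => ml α 1 (-s ^ α)) hα.le hα1 hcont hdiff
      (h0.symm ▸ zero_le_one) (fun s hs hlt => ?_) ht
    rw [hcaputo s hs]
    linarith
  · refine le_of_caputo_neg (f := fun s => ml α 1 (-s ^ α)) hα.le hα1 hcont hdiff h0.le
      (fun s hs hlt => ?_) ht
    rw [hcaputo s hs]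
    linarith

lemma rpow_mul_ml_neg_rpow_mem_Icc (hα : 0 < α) (hα1 : α < 1) (ht : 0 ≤ t) :
    t ^ α * ml α α (-t ^ α) ∈ Icc 0 α := by
  have hcont := (Real.continuous_rpow_const hα.le).continuousOn.mul
    (continuousOn_ml_neg_rpow hα hα)
  have hdiff : DifferentiableOn ℝ (fun s => s ^ α * ml α α (-s ^ α)) (Ioi 0) :=
    DifferentiableOn.mul (fun s hs => (Real.differentiableAt_rpow_const_of_ne α
      (ne_of_gt hs)).differentiableWithinAt) (differentiableOn_ml_neg_rpow hα hα)
  have h0 : 0 ^ α * ml α α (-0 ^ α) = 0 := by rw [Real.zero_rpow hα.ne', zero_mul]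
  have hcaputo : ∀ s > 0, caputo α (fun s => s ^ α * ml α α (-s ^ α)) s
      = -(s ^ α * ml α α (-s ^ α)) + α * ml α 1 (-s ^ α) := fun s hs => by
    simpa only [neg_one_mul] using caputo_rpow_mul_ml hα hα1 hs (-1)
  constructor
  · refine le_of_caputo_pos (f := fun s => s ^ α * ml α α (-s ^ α)) hα.le hα1 hcont hdiff h0.ge
      (fun s hs hlt => ?_) ht
    rw [hcaputo s hs]
    linarith [mul_nonneg hα.le (ml_one_neg_rpow_mem_Icc hα hα1 (le_of_lt hs)).1]
  · refine le_of_caputo_neg (f := fun s => s ^ α * ml α α (-s ^ α)) hα.le hα1 hcont hdiff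
      (h0.trans_le hα.le) (fun s hs hlt => ?_) ht
    rw [hcaputo s hs]
    linarith [mul_le_of_le_one_right hα.le (ml_one_neg_rpow_mem_Icc hα hα1 (le_of_lt hs)).2]

theorem ml_one_neg_mem_Icc (hα : 0 < α) (hα1 : α ≤ 1) (hx : 0 ≤ x) : ml α 1 (-x) ∈ Icc 0 1 := by
  rcases hα1.eq_or_lt with rfl | hα1
  · rw [ml_one_one]
    exact ⟨(Real.exp_pos _).le, Real.exp_le_one_iff.2 (neg_nonpos.2 hx)⟩
  · simpa only [Real.rpow_inv_rpow hx hα.ne'] using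
      ml_one_neg_rpow_mem_Icc hα hα1 (Real.rpow_nonneg hx α⁻¹)

theorem mul_ml_neg_mem_Icc (hα : 0 < α) (hα1 : α ≤ 1) (hx : 0 ≤ x) :
    x * ml α α (-x) ∈ Icc 0 α := by
  rcases hα1.eq_or_lt with rfl | hα1
  · rw [ml_one_one]
    refine ⟨by positivity, (Real.mul_exp_neg_le_exp_neg_one x).trans ?_⟩
    exact Real.exp_le_one_iff.2 (by norm_num)
  · simpa only [Real.rpow_inv_rpow hx hα.ne'] using
      rpow_mul_ml_neg_rpow_mem_Icc hα hα1 (Real.rpow_nonneg hx α⁻¹)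

lemma abs_mul_rpow_mul_ml_le_inv {lam : ℝ} (hα : 0 < α) (hα1 : α ≤ 1) (hlam : 0 ≤ lam)
    (ht : 0 < t) : |lam * t ^ (α - 1) * ml α α (-lam * t ^ α)| ≤ t⁻¹ := by
  have hV := mul_ml_neg_mem_Icc hα hα1 (x := lam * t ^ α) (by positivity)
  have heq : lam * t ^ (α - 1) * ml α α (-lam * t ^ α)
      = t⁻¹ * (lam * t ^ α * ml α α (-(lam * t ^ α))) := by
    rw [Real.rpow_sub_one ht.ne', neg_mul]
    ring
  rw [heq, abs_of_nonneg (mul_nonneg (by positivity) hV.1)]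
  exact mul_le_of_le_one_right (by positivity) (hV.2.trans hα1)

end Bounds

section UniformConvergence

variable {β E : Type*} [NormedAddCommGroup E] [CompleteSpace E] {s : Set β}

lemma hasSum_of_tendstoUniformlyOn_of_nonneg {v : ℕ → β → ℝ} {g : β → ℝ} {z : β}
    (hv : TendstoUniformlyOn (fun N z => ∑ i ∈ Finset.range N, v i z) g atTop s)
    (hv0 : ∀ i, 0 ≤ v i z) (hz : z ∈ s) : HasSum (fun i => v i z) (g z) :=
  (hasSum_iff_tendsto_nat_of_nonneg hv0 _).2 (hv.tendsto_at hz)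

theorem tendstoUniformlyOn_tsum_of_norm_le {F : ℕ → β → E} {v : ℕ → β → ℝ} {g : β → ℝ}
    (hv : TendstoUniformlyOn (fun N z => ∑ i ∈ Finset.range N, v i z) g atTop s)
    (hF : ∀ i, ∀ z ∈ s, ‖F i z‖ ≤ v i z) :
    TendstoUniformlyOn (fun N z => ∑ i ∈ Finset.range N, F i z) (fun z => ∑' i, F i z) atTop s := by
  refine Metric.tendstoUniformlyOn_iff.2 fun ε hε => ?_
  filter_upwards [Metric.tendstoUniformlyOn_iff.1 hv ε hε] with N hN z hz
  have hvsum := hasSum_of_tendstoUniformlyOn_of_nonneg hv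
    (fun i => (norm_nonneg _).trans (hF i z hz)) hz
  have hFsum : Summable fun i => F i z := hvsum.summable.of_norm_bounded fun i => hF i z hz
  calc dist (∑' i, F i z) (∑ i ∈ Finset.range N, F i z)
      = ‖∑' i, F (i + N) z‖ := by
        rw [dist_eq_norm, ← hFsum.sum_add_tsum_nat_add N, add_sub_cancel_left]
    _ ≤ g z - ∑ i ∈ Finset.range N, v i z :=
        tsum_of_norm_bounded ((hasSum_nat_add_iff' N).2 hvsum) fun i => hF _ z hz
    _ < ε := (le_abs_self _).trans_lt (hN z hz)

lemma abs_mul_le_mul_sq_add_sq_div {lam : ℝ} (hlam : 0 < lam) (c x : ℝ) :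
    |c * x| ≤ lam * c ^ 2 + x ^ 2 / lam := by
  have hsq : lam * c ^ 2 + x ^ 2 / lam - 2 * |c * x| = (lam * |c| - |x|) ^ 2 / lam := by
    rw [← sq_abs c, ← sq_abs x, abs_mul]
    field_simp
    ring
  have : 0 ≤ (lam * |c| - |x|) ^ 2 / lam := by positivity
  linarith [abs_nonneg (c * x)]

theorem tendstoUniformlyOn_tsum_abs_mul {lam c : ℕ → ℝ} {X : ℕ → β → ℝ} {g : β → ℝ}
    (hlam : ∀ i, 0 < lam i)
    (hX : TendstoUniformlyOn (fun N x => ∑ i ∈ Finset.range N, X i x ^ 2 / lam i) g atTop s)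
    (hc : Summable fun i => lam i * c i ^ 2) :
    TendstoUniformlyOn (fun N x => ∑ i ∈ Finset.range N, |c i * X i x|)
      (fun x => ∑' i, |c i * X i x|) atTop s := by
  have hmaj := (hc.hasSum.tendsto_sum_nat.tendstoUniformlyOn_const s).add hX
  simp only [Pi.add_def, ← Finset.sum_add_distrib] at hmaj
  refine tendstoUniformlyOn_tsum_of_norm_le hmaj fun i x _ => ?_
  rw [Real.norm_eq_abs, abs_abs]
  exact abs_mul_le_mul_sq_add_sq_div (hlam i) _ _

end UniformConvergence

section RelaxationSeries

variable {ι : Type*} {α t : ℝ} {a lam : ι → ℝ}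

lemma summable_mul_ml_neg (hα : 0 < α) (hα1 : α ≤ 1) (hlam : ∀ i, 0 ≤ lam i) (ha : Summable a)
    (ht : 0 ≤ t) : Summable fun i => a i * ml α 1 (-lam i * t ^ α) := by
  refine ha.abs.of_norm_bounded fun i => ?_
  have hE := ml_one_neg_mem_Icc hα hα1 (mul_nonneg (hlam i) (Real.rpow_nonneg ht α))
  rw [neg_mul, Real.norm_eq_abs, abs_mul, abs_of_nonneg hE.1]
  exact mul_le_of_le_one_right (abs_nonneg _) hE.2

lemma norm_mul_rpow_mul_ml_le {b r ε : ℝ} (hα : 0 < α) (hα1 : α ≤ 1) (hr : 0 ≤ r) (hε : 0 < ε)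
    (ht : ε ≤ t) : ‖b * (r * t ^ (α - 1) * ml α α (-r * t ^ α))‖ ≤ ε⁻¹ * |b| := by
  rw [Real.norm_eq_abs, abs_mul, mul_comm]
  gcongr
  exact (abs_mul_rpow_mul_ml_le_inv hα hα1 hr (hε.trans_le ht)).trans (inv_anti₀ hε ht)

theorem hasDerivAt_tsum_mul_ml (hα : 0 < α) (hα1 : α ≤ 1) (hlam : ∀ i, 0 ≤ lam i)
    (ha : Summable a) (ht : 0 < t) :
    HasDerivAt (fun s => ∑' i, a i * ml α 1 (-lam i * s ^ α))
      (-∑' i, a i * (lam i * t ^ (α - 1) * ml α α (-lam i * t ^ α))) t := by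
  have hε : 0 < t / 2 := half_pos ht
  have hmem : t ∈ Ioi (t / 2) := half_lt_self ht
  rw [← tsum_neg]
  refine hasDerivAt_tsum_of_isPreconnected (g := fun i s => a i * ml α 1 (-lam i * s ^ α))
    (g' := fun i s => -(a i * (lam i * s ^ (α - 1) * ml α α (-lam i * s ^ α))))
    (ha.abs.mul_left (t / 2)⁻¹) isOpen_Ioi isPreconnected_Ioi
    (fun i s (hs : t / 2 < s) => ?_) (fun i s (hs : t / 2 < s) => ?_) hmem
    (summable_mul_ml_neg hα hα1 hlam ha ht.le) hmem
  · refine ((hasDerivAt_ml_one_rpow hα (-lam i) (hε.trans hs)).const_mul (a i)).congr_deriv ?_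
    ring
  · rw [norm_neg]
    exact norm_mul_rpow_mul_ml_le hα hα1 (hlam i) hε hs.le

lemma continuousOn_rpow_mul_ml (hα : 0 < α) (r : ℝ) :
    ContinuousOn (fun s => r * s ^ (α - 1) * ml α α (-r * s ^ α)) (Ioi 0) := by
  have hpow (p : ℝ) : ContinuousOn (fun s : ℝ => s ^ p) (Ioi 0) :=
    continuousOn_id.rpow_const fun s hs => .inl (ne_of_gt hs)
  exact (continuousOn_const.mul (hpow _)).mul
    ((differentiable_ml hα hα).continuous.comp_continuousOn (continuousOn_const.mul (hpow α)))

lemma continuousOn_tsum_mul_rpow_mul_ml (hα : 0 < α) (hα1 : α ≤ 1) (hlam : ∀ i, 0 ≤ lam i)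
    (ha : Summable a) : ContinuousOn
      (fun s => ∑' i, a i * (lam i * s ^ (α - 1) * ml α α (-lam i * s ^ α))) (Ioi 0) := by
  intro t (ht : 0 < t)
  have hε : 0 < t / 2 := half_pos ht
  refine ContinuousAt.continuousWithinAt (ContinuousOn.continuousAt (s := Ioi (t / 2)) ?_
    (Ioi_mem_nhds (half_lt_self ht)))
  exact continuousOn_tsum
    (fun i => continuousOn_const.mul
      ((continuousOn_rpow_mul_ml hα _).mono (Ioi_subset_Ioi hε.le)))
    (ha.abs.mul_left (t / 2)⁻¹)
    fun i s hs => norm_mul_rpow_mul_ml_le hα hα1 (hlam i) hε (le_of_lt hs)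

theorem contDiffOn_tsum_mul_ml (hα : 0 < α) (hα1 : α ≤ 1) (hlam : ∀ i, 0 ≤ lam i)
    (ha : Summable a) :
    ContDiffOn ℝ 1 (fun s => ∑' i, a i * ml α 1 (-lam i * s ^ α)) (Ioi 0) := by
  have hderiv := fun (t : ℝ) (ht : t ∈ Ioi 0) => hasDerivAt_tsum_mul_ml hα hα1 hlam ha ht
  refine (contDiffOn_one_iff_derivWithin (uniqueDiffOn_Ioi 0)).2
    ⟨fun t ht => (hderiv t ht).differentiableAt.differentiableWithinAt, ?_⟩
  refine (continuousOn_tsum_mul_rpow_mul_ml hα hα1 hlam ha).neg.congr fun t ht => ?_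
  rw [derivWithin_of_isOpen isOpen_Ioi ht, (hderiv t ht).deriv, Pi.neg_apply]

end RelaxationSeries

lemma summable_mul_of_summable_sq_mul {r f : ℕ → ℝ} (hr : Tendsto r atTop atTop)
    (hf : ∀ i, 0 ≤ f i) (hsum : Summable fun i => r i ^ 2 * f i) :
    Summable fun i => r i * f i := by
  refine hsum.of_norm_bounded_eventually_nat ?_
  filter_upwards [hr.eventually_ge_atTop 1] with i hi
  rw [Real.norm_of_nonneg (mul_nonneg (by linarith) (hf i))]
  exact mul_le_mul_of_nonneg_right (le_self_pow₀ hi two_ne_zero) (hf i)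

theorem time_regularity_1d_general {E : Type*} {S : Set E} {α : ℝ} (hα : 0 < α) (hα1 : α ≤ 1)
    {lam c : ℕ → ℝ} {X : ℕ → E → ℝ} (hlam : ∀ i, 0 < lam i)
    (hX : ∃ g : E → ℝ, TendstoUniformlyOn
      (fun N x => ∑ i ∈ Finset.range N, X i x ^ 2 / lam i) g atTop S)
    (hc : Summable fun i => lam i * c i ^ 2) :
    (∀ x ∈ S,
      ContDiffOn ℝ 1 (fun t => ∑' i, c i * ml α 1 (-lam i * t ^ α) * X i x) (Ioi 0) ∧
      ∀ t > 0, HasDerivAt (fun s => ∑' i, c i * ml α 1 (-lam i * s ^ α) * X i x)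
        (-∑' i, c i * lam i * t ^ (α - 1) * ml α α (-lam i * t ^ α) * X i x) t) ∧
    ∀ ε > 0, TendstoUniformlyOn
      (fun N (z : E × ℝ) => ∑ i ∈ Finset.range N,
        -(c i * lam i * z.2 ^ (α - 1) * ml α α (-lam i * z.2 ^ α) * X i z.1))
      (fun z => -∑' i, c i * lam i * z.2 ^ (α - 1) * ml α α (-lam i * z.2 ^ α) * X i z.1)
      atTop (S ×ˢ Ici ε) := by
  obtain ⟨g, hg⟩ := hX
  have habs := tendstoUniformlyOn_tsum_abs_mul hlam hg hc
  have hlam' : ∀ i, 0 ≤ lam i := fun i => (hlam i).le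
  have hterm : ∀ i x t, c i * lam i * t ^ (α - 1) * ml α α (-lam i * t ^ α) * X i x
      = c i * X i x * (lam i * t ^ (α - 1) * ml α α (-lam i * t ^ α)) := fun i x t => by ring
  simp only [hterm, mul_right_comm (c _) (ml _ _ _)]
  refine ⟨fun x hx => ?_, fun ε hε => ?_⟩
  · have ha : Summable fun i => c i * X i x := summable_abs_iff.1
      (hasSum_of_tendstoUniformlyOn_of_nonneg habs (fun i => abs_nonneg _) hx).summable
    exact ⟨contDiffOn_tsum_mul_ml hα hα1 hlam' ha,
      fun t ht => hasDerivAt_tsum_mul_ml hα hα1 hlam' ha ht⟩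
  · have hmaj := (uniformContinuous_const_smul ε⁻¹).comp_tendstoUniformlyOn
      ((habs.comp (Prod.fst : E × ℝ → E)).mono fun z (hz : z ∈ S ×ˢ Ici ε) => hz.1)
    simp only [Function.comp_def, smul_eq_mul, Finset.mul_sum] at hmaj
    simp only [← tsum_neg]
    refine tendstoUniformlyOn_tsum_of_norm_le hmaj fun i z hz => ?_
    rw [norm_neg]
    exact norm_mul_rpow_mul_ml_le hα hα1 (hlam' i) hε hz.2

/-- time regularity, Theorem 6: with Sturm–Liouville eigendata
`(λ_i, X_i)` on `[0,l]` and coefficients with `∑ λ_i² c_i² < ∞`, the function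
`u(x,t) = ∑ c_i E_α(−λ_i t^α) X_i(x)` is, for each `x ∈ [0,l]`, continuously
differentiable in `t` on `(0,T)` with
`∂u/∂t(x,t) = −∑ c_i λ_i t^{α−1} E_{α,α}(−λ_i t^α) X_i(x)`, the series converging
uniformly on `[0,l]×[ε,T]` for every `0<ε<T`. -/
theorem time_regularity_1d (α T l : ℝ) (hα : 0 < α) (hα1 : α < 1) (hT : 0 < T)
    (p q : ℝ → ℝ) (lam : ℕ → ℝ) (X : ℕ → ℝ → ℝ)
    (hSL : SturmLiouvilleData l p q lam X)
    (c : ℕ → ℝ) (hc : Summable fun i => lam i ^ 2 * c i ^ 2) :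
    let u : ℝ → ℝ → ℝ := fun x t => ∑' i, c i * ml α 1 (-lam i * t ^ α) * X i x
    (∀ x ∈ Set.Icc (0:ℝ) l,
      ContDiffOn ℝ 1 (fun t => u x t) (Set.Ioo 0 T) ∧
      ∀ t ∈ Set.Ioo (0:ℝ) T,
        deriv (fun s => u x s) t
          = -∑' i, c i * lam i * t ^ (α - 1) * ml α α (-lam i * t ^ α) * X i x) ∧
    (∀ ε : ℝ, 0 < ε → ε < T →
      TendstoUniformlyOn
        (fun N (z : ℝ × ℝ) => ∑ i ∈ Finset.range N,
          -(c i * lam i * z.2 ^ (α - 1) * ml α α (-lam i * z.2 ^ α) * X i z.1))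
        (fun z : ℝ × ℝ =>
          -∑' i, c i * lam i * z.2 ^ (α - 1) * ml α α (-lam i * z.2 ^ α) * X i z.1)
        Filter.atTop (Set.Icc 0 l ×ˢ Set.Icc ε T)) := by
  have hc' := summable_mul_of_summable_sq_mul hSL.hlamtop (fun i => sq_nonneg (c i)) hc
  obtain ⟨hpointwise, huniform⟩ :=
    time_regularity_1d_general hα hα1.le hSL.hlam hSL.hser1 hc'
  refine ⟨fun x hx => ⟨(hpointwise x hx).1.mono Ioo_subset_Ioi_self, fun t ht =>
    ((hpointwise x hx).2 t ht.1).deriv⟩, fun ε hε _ => ?_⟩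
  exact (huniform ε hε).mono (prod_mono_right Icc_subset_Ici_self)
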